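/- arXiv:1707.06685 — 2 statements merged into one kernel-verified Lean document; each statement's English description precedes it below -/
import Mathlib

section
/- Let C be a category equipped with an orthogonal factorization system (E, M), let (S, η^S, μ^S) and (T, η^T, μ^T) be monads on C, and let m : S ⟶ T be a morphism of monads. Factorize m pointwise: for each object X choose e_X : S X → R X in E and n_X : R X → T X in M with m_X = n_X ∘ e_X, and let R : C ⥤ C be the induced functor making e : S ⟶ R and n : R ⟶ T natural transformations. Assume that E is closed under the functor S, i.e., S e ∈ E whenever e ∈ E. Then R carries a monad structure (R, η^R, μ^R) such that e : S ⟶ R and n : R ⟶ T are morphisms of monads (in particular η^R = e ∘ η^S, n ∘ η^R = η^T, e_X ∘ μ^S_X = μ^R_X ∘ e_{R X} ∘ S e_X, and n_X ∘ μ^R_X = μ^T_X ∘ n_{R X} ∘ T n_X for every object X). -/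
/-!
The proof rests on one consequence of orthogonality: two parallel maps that agree after
precomposition with a map in `E` and after postcomposition with a map in `M` are equal
(`OrthFactSystem.cancel`).  The unit of `R` is `e ∘ η^S`.  Since `E` is closed under `S`, the
composite `S S X ⟶ S R X ⟶ R R X` of `S e_X` and `e_{R X}` lies in `E`, and `μ^R_X` is the diagonal
filler of the square formed by this composite, `n_X`, and the two maps `e_X ∘ μ^S_X` and
`μ^T_X ∘ (n ∗ n)_X`.  The two triangles of the filler say that `e` and `n` respect the
multiplications.  Naturality of `μ^R` and the monad laws are checked with `cancel`: precomposed
with `E`-maps they reduce to the corresponding facts for `S`, and postcomposed with `n` to those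
for `T`.
-/

open CategoryTheory

universe v u

/-- An orthogonal factorization system `(E, M)` on a category `C`: two classes of
morphisms, each containing all isomorphisms and closed under composition, such that
every morphism factors as a morphism in `E` followed by a morphism in `M`, and `E` is
left orthogonal to `M` (unique diagonal fillers for commutative squares). -/
structure OrthFactSystem (C : Type u) [Category.{v} C] where
  E : MorphismProperty C
  M : MorphismProperty C
  E_iso : ∀ {X Y : C} (f : X ⟶ Y), IsIso f → E f
  M_iso : ∀ {X Y : C} (f : X ⟶ Y), IsIso f → M f
  E_comp : ∀ {X Y Z : C} (f : X ⟶ Y) (g : Y ⟶ Z), E f → E g → E (f ≫ g)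
  M_comp : ∀ {X Y Z : C} (f : X ⟶ Y) (g : Y ⟶ Z), M f → M g → M (f ≫ g)
  fact : ∀ {X Y : C} (f : X ⟶ Y),
    ∃ (Z : C) (e : X ⟶ Z) (n : Z ⟶ Y), E e ∧ M n ∧ e ≫ n = f
  orth : ∀ {A B X Y : C} (e : A ⟶ B) (n : X ⟶ Y), E e → M n →
    ∀ (v : A ⟶ X) (u : B ⟶ Y), e ≫ u = v ≫ n →
      ∃! d : B ⟶ X, e ≫ d = v ∧ d ≫ n = u

/-- Uniqueness of diagonal fillers as a joint cancellation property of `E` and `M`. -/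
theorem OrthFactSystem.cancel {C : Type u} [Category.{v} C] (fs : OrthFactSystem C)
    {A B X Y : C} {e : A ⟶ B} {n : X ⟶ Y} (he : fs.E e) (hn : fs.M n) {f g : B ⟶ X}
    (h₁ : e ≫ f = e ≫ g) (h₂ : f ≫ n = g ≫ n) : f = g :=
  (fs.orth e n he hn (e ≫ g) (g ≫ n) (by simp)).unique ⟨h₁, h₂⟩ ⟨rfl, rfl⟩

/-- Let `m : S ⟶ T` be a monad morphism, factorized pointwise through a functor `R`
via natural transformations `e : S ⟶ R` (pointwise in `E`) and `n : R ⟶ T`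
(pointwise in `M`).  If `E` is closed under the functor `S`, then `R` carries a monad
structure `(η, μ)` such that `e` and `n` are morphisms of monads. -/
theorem factorization_monad_structure {C : Type u} [Category.{v} C]
    (fs : OrthFactSystem C)
    (S T : Monad C) (m : S ⟶ T)
    (R : C ⥤ C) (e : (S : C ⥤ C) ⟶ R) (n : R ⟶ (T : C ⥤ C))
    (he : ∀ X : C, fs.E (e.app X)) (hn : ∀ X : C, fs.M (n.app X))
    (hfact : ∀ X : C, e.app X ≫ n.app X = m.toNatTrans.app X)
    (hSE : ∀ {X Y : C} (f : X ⟶ Y), fs.E f → fs.E ((S : C ⥤ C).map f)) :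
    ∃ (η : 𝟭 C ⟶ R) (μ : R ⋙ R ⟶ R),
      -- monad laws for (R, η, μ)
      (∀ X : C, η.app (R.obj X) ≫ μ.app X = 𝟙 (R.obj X)) ∧
      (∀ X : C, R.map (η.app X) ≫ μ.app X = 𝟙 (R.obj X)) ∧
      (∀ X : C, R.map (μ.app X) ≫ μ.app X = μ.app (R.obj X) ≫ μ.app X) ∧
      -- e : S ⟶ R is a monad morphism: η^R = e ∘ η^S and e ∘ μ^S = μ^R ∘ (e ∗ e)
      (∀ X : C, η.app X = S.η.app X ≫ e.app X) ∧
      (∀ X : C, S.μ.app X ≫ e.app X =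
        (S : C ⥤ C).map (e.app X) ≫ e.app (R.obj X) ≫ μ.app X) ∧
      -- n : R ⟶ T is a monad morphism: n ∘ η^R = η^T and n ∘ μ^R = μ^T ∘ (n ∗ n)
      (∀ X : C, η.app X ≫ n.app X = T.η.app X) ∧
      (∀ X : C, μ.app X ≫ n.app X =
        n.app (R.obj X) ≫ (T : C ⥤ C).map (n.app X) ≫ T.μ.app X) := by
  have hee : ∀ X : C, fs.E ((S : C ⥤ C).map (e.app X) ≫ e.app (R.obj X)) := fun X =>
    fs.E_comp _ _ (hSE _ (he X)) (he _)
  have en : ∀ {X Y : C} (f : X ⟶ Y), S.map f ≫ e.app Y = e.app X ≫ R.map f :=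
    fun f => e.naturality f
  have nn : ∀ {X Y : C} (f : X ⟶ Y), R.map f ≫ n.app Y = n.app X ≫ T.map f :=
    fun f => n.naturality f
  -- The square defining `μ^R` commutes because `m = n ∘ e` respects the multiplications.
  have hsq : ∀ X : C, ((S : C ⥤ C).map (e.app X) ≫ e.app (R.obj X)) ≫
      (n.app (R.obj X) ≫ (T : C ⥤ C).map (n.app X) ≫ T.μ.app X) =
      (S.μ.app X ≫ e.app X) ≫ n.app X := by
    intro X
    have h := m.app_μ X
    rw [← hfact, ← hfact] at h
    simp only [Category.assoc, Functor.map_comp] at h ⊢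
    rw [h, reassoc_of% (en (n.app X)), reassoc_of% (nn (n.app X))]
  choose μ hμ _ using fun X => fs.orth _ _ (hee X) (hn X) _ _ (hsq X)
  have eμ : ∀ X, S.map (e.app X) ≫ e.app (R.obj X) ≫ μ X = S.μ.app X ≫ e.app X := fun X => by
    simpa using (hμ X).1
  have μn : ∀ X, μ X ≫ n.app X = n.app (R.obj X) ≫ T.map (n.app X) ≫ T.μ.app X :=
    fun X => (hμ X).2
  have μnat : ∀ {X Y : C} (f : X ⟶ Y), R.map (R.map f) ≫ μ Y = μ X ≫ R.map f := by
    intro X Y f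
    refine fs.cancel (hee X) (hn Y) ?_ ?_
    · simp only [Category.assoc]
      rw [reassoc_of% (eμ X), ← en, ← reassoc_of% (en (R.map f)), ← S.mu_naturality_assoc, ← eμ,
        ← S.map_comp_assoc, ← S.map_comp_assoc, en]
    · simp only [Category.assoc]
      rw [nn, reassoc_of% (μn X), μn, reassoc_of% (nn (R.map f)), ← T.mu_naturality,
        ← T.map_comp_assoc, ← T.map_comp_assoc, nn]
  have hηn : ∀ X, S.η.app X ≫ e.app X ≫ n.app X = T.η.app X := fun X => by
    rw [hfact]; exact m.app_η X
  refine ⟨S.η ≫ e, ⟨μ, fun X Y f => μnat f⟩, ?_, ?_, ?_, fun X => rfl, fun X => (eμ X).symm,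
    fun X => by simpa using hηn X, μn⟩
  · intro X
    refine fs.cancel (he X) (hn X) ?_ ?_
    · simp only [NatTrans.comp_app, Category.assoc, Category.comp_id]
      rw [S.unit_naturality_assoc, eμ, S.left_unit_assoc]
    · simp only [NatTrans.comp_app, Category.assoc, Category.id_comp]
      rw [μn, reassoc_of% (hηn (R.obj X)), ← T.unit_naturality_assoc, T.left_unit]
      exact Category.comp_id _
  · intro X
    refine fs.cancel (he X) (hn X) ?_ ?_
    · simp only [NatTrans.comp_app, Category.comp_id]
      rw [← reassoc_of% (en (S.η.app X ≫ e.app X)), S.map_comp_assoc, eμ, S.right_unit_assoc]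
    · simp only [NatTrans.comp_app, Category.assoc, Category.id_comp]
      rw [μn, reassoc_of% (nn (S.η.app X ≫ e.app X)), ← T.map_comp_assoc]
      simp [hηn]
  · intro X
    -- The `E`-map here is the composite `S S S X ⟶ S R R X ⟶ R R R X`.
    refine fs.cancel (fs.E_comp _ _ (hSE _ (hee X)) (he (R.obj (R.obj X)))) (hn X) ?_ ?_
    · simp only [Category.assoc]
      rw [← reassoc_of% (en (μ X)), ← S.map_comp_assoc, Category.assoc, eμ,
        S.map_comp_assoc, eμ, reassoc_of% (S.assoc X), S.map_comp_assoc,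
        reassoc_of% (eμ (R.obj X)), S.mu_naturality_assoc, eμ]
    · simp only [Category.assoc]
      rw [μn, reassoc_of% (nn (μ X)), reassoc_of% (μn (R.obj X)), ← T.map_comp_assoc, μn,
        ← T.mu_naturality_assoc, T.map_comp_assoc, T.map_comp_assoc, T.assoc]
end

section
/- Let C be a category equipped with an orthogonal factorization system (E, M), let (S, η^S, μ^S) and (T, η^T, μ^T) be monads on C, let m : S ⟶ T be a morphism of monads, and assume E is closed under S. Let R : C ⥤ C, e : S ⟶ R (pointwise in E) and n : R ⟶ T (pointwise in M) be the induced pointwise factorization of m. Then the monad structure (η^R, μ^R) on R for which e and n are monad morphisms is unique: if (η, μ) and (η', μ') are two monad structures on the functor R such that e : S ⟶ R and n : R ⟶ T are monad morphisms for both, then η = η' and μ = μ'. -/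
/-!
The unit is forced by `e` preserving units: `η = S.η ≫ e`. For the multiplication, the
composite `S (e X) ≫ e (R X) : S S X ⟶ R R X` lies in `E`, because `E` is closed under `S`
and composition, while `n X : R X ⟶ T X` lies in `M`. Compatibility of `e` and `n` with
multiplications says exactly that `μ X` is a diagonal filler of a square between these two
morphisms which does not depend on `μ`; such fillers are unique.
-/

open CategoryTheory

universe v u

/-- `(η, μ)` is a monad structure on the functor `R` for which both
`e : S ⟶ R` and `n : R ⟶ T` are morphisms of monads. -/
def IsCompatibleMonadStructure {C : Type u} [Category.{v} C]
    (S T : Monad C) (R : C ⥤ C)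
    (e : (S : C ⥤ C) ⟶ R) (n : R ⟶ (T : C ⥤ C))
    (η : 𝟭 C ⟶ R) (μ : R ⋙ R ⟶ R) : Prop :=
  -- monad laws for (R, η, μ)
  (∀ X : C, η.app (R.obj X) ≫ μ.app X = 𝟙 (R.obj X)) ∧
  (∀ X : C, R.map (η.app X) ≫ μ.app X = 𝟙 (R.obj X)) ∧
  (∀ X : C, R.map (μ.app X) ≫ μ.app X = μ.app (R.obj X) ≫ μ.app X) ∧
  -- e : S ⟶ R is a monad morphism
  (∀ X : C, η.app X = S.η.app X ≫ e.app X) ∧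
  (∀ X : C, S.μ.app X ≫ e.app X =
    (S : C ⥤ C).map (e.app X) ≫ e.app (R.obj X) ≫ μ.app X) ∧
  -- n : R ⟶ T is a monad morphism
  (∀ X : C, η.app X ≫ n.app X = T.η.app X) ∧
  (∀ X : C, μ.app X ≫ n.app X =
    n.app (R.obj X) ≫ (T : C ⥤ C).map (n.app X) ≫ T.μ.app X)

/-- Uniqueness of the induced monad structure on the pointwise factorization `R` of a
monad morphism `m : S ⟶ T` through `e : S ⟶ R` (pointwise in `E`) and `n : R ⟶ T`
(pointwise in `M`), assuming `E` is closed under `S`: any two monad structures on the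
functor `R` making both `e` and `n` monad morphisms coincide. -/
theorem factorization_monad_structure_unique {C : Type u} [Category.{v} C]
    (fs : OrthFactSystem C)
    (S T : Monad C) (m : S ⟶ T)
    (R : C ⥤ C) (e : (S : C ⥤ C) ⟶ R) (n : R ⟶ (T : C ⥤ C))
    (he : ∀ X : C, fs.E (e.app X)) (hn : ∀ X : C, fs.M (n.app X))
    (hfact : ∀ X : C, e.app X ≫ n.app X = m.toNatTrans.app X)
    (hSE : ∀ {X Y : C} (f : X ⟶ Y), fs.E f → fs.E ((S : C ⥤ C).map f))
    (η η' : 𝟭 C ⟶ R) (μ μ' : R ⋙ R ⟶ R)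
    (h : IsCompatibleMonadStructure S T R e n η μ)
    (h' : IsCompatibleMonadStructure S T R e n η' μ') :
    η = η' ∧ μ = μ' := by
  obtain ⟨-, -, -, hη, hμe, -, hμn⟩ := h
  obtain ⟨-, -, -, hη', hμe', -, hμn'⟩ := h'
  constructor
  · ext X
    rw [hη, hη']
  · ext X
    have hE : fs.E ((S : C ⥤ C).map (e.app X) ≫ e.app (R.obj X)) :=
      fs.E_comp _ _ (hSE _ (he X)) (he (R.obj X))
    -- The square commutes because `μ X` itself is a filler.
    have hsq : ((S : C ⥤ C).map (e.app X) ≫ e.app (R.obj X)) ≫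
        (n.app (R.obj X) ≫ (T : C ⥤ C).map (n.app X) ≫ T.μ.app X) =
        (S.μ.app X ≫ e.app X) ≫ n.app X := by
      rw [← hμn X, hμe X]
      simp only [Category.assoc]
    exact (fs.orth _ _ hE (hn X) _ _ hsq).unique
      ⟨(Category.assoc _ _ _).trans (hμe X).symm, hμn X⟩
      ⟨(Category.assoc _ _ _).trans (hμe' X).symm, hμn' X⟩
end
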